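/- Let {x^k}, {t_k} be generated by the multiobjective MFISTA algorithm, and define σ_k(z) := min_{i=1,…,m} ( F_i(x^k) − F_i(z) ). Then for every z ∈ ℝ^n and every k ≥ 1: t_k² · σ_k(z) ≤ (ℓ/2)‖x^0 − z‖². -/

import Mathlib

open scoped RealInnerProductSpace

noncomputable abbrev E (n : ℕ) := EuclideanSpace ℝ (Fin n)

lemma aux_line {n : ℕ} (f : E n → ℝ) (hfd : ContDiff ℝ 1 f) (b v : E n) (s : ℝ) :
    HasDerivAt (fun s : ℝ => f (b + s • v)) ⟪gradient f (b + s • v), v⟫ s := by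
  have h1 : HasGradientAt f (gradient f (b + s • v)) (b + s • v) :=
    ((hfd.differentiable (by norm_num)) _).hasGradientAt
  have h2 : HasDerivAt (fun s : ℝ => b + s • v) v s := by
    simpa using ((hasDerivAt_id s).smul_const v).const_add b
  have h3 := h1.hasFDerivAt.comp_hasDerivAt s h2
  have e : (InnerProductSpace.toDual ℝ (E n) (gradient f (b + s • v))) v = ⟪gradient f (b + s • v), v⟫ :=
    InnerProductSpace.toDual_apply_apply ..
  rw [e] at h3
  exact h3

lemma aux_descent {n : ℕ} (f : E n → ℝ) (hfd : ContDiff ℝ 1 f) (L : ℝ)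
    (hflip : ∀ a b, ‖gradient f a - gradient f b‖ ≤ L * ‖a - b‖) (b p : E n) :
    f p ≤ f b + ⟪gradient f b, p - b⟫ + L / 2 * ‖p - b‖ ^ 2 := by
  set v := p - b with hv
  have hder : ∀ s : ℝ, HasDerivAt
      (fun s : ℝ => f (b + s • v) - s * ⟪gradient f b, v⟫ - s ^ 2 * (L / 2 * ‖v‖ ^ 2))
      (⟪gradient f (b + s • v), v⟫ - ⟪gradient f b, v⟫ - 2 * s * (L / 2 * ‖v‖ ^ 2)) s := by
    intro s
    have := ((aux_line f hfd b v s).sub ((hasDerivAt_id s).mul_const ⟪gradient f b, v⟫)).sub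
      ((hasDerivAt_pow 2 s).mul_const (L / 2 * ‖v‖ ^ 2))
    exact HasDerivAt.congr_deriv this (by norm_num)
  have hanti := antitoneOn_of_deriv_nonpos (convex_Icc (0:ℝ) 1)
    (fun s _ => (hder s).continuousAt.continuousWithinAt)
    (fun s _ => (hder s).differentiableAt.differentiableWithinAt)
    (fun s hs => by
      rw [(hder s).deriv]
      rw [interior_Icc] at hs
      have h1 := real_inner_le_norm (gradient f (b + s • v) - gradient f b) v
      have h2 := hflip (b + s • v) b
      rw [add_sub_cancel_left, norm_smul, Real.norm_of_nonneg hs.1.le] at h2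
      rw [inner_sub_left] at h1
      nlinarith [mul_le_mul_of_nonneg_right h2 (norm_nonneg v)])
  have h := hanti (Set.left_mem_Icc.2 zero_le_one) (Set.right_mem_Icc.2 zero_le_one) zero_le_one
  have hp : b + v = p := by rw [hv]; abel
  simp [hp, -inner_gradient_left] at h
  linarith

lemma aux_grad {n : ℕ} (f : E n → ℝ) (hfd : ContDiff ℝ 1 f) (hfc : ConvexOn ℝ Set.univ f)
    (b w : E n) : f b + ⟪gradient f b, w - b⟫ ≤ f w := by
  set v := w - b with hv
  have hw : b + v = w := by rw [hv]; abel
  have hc : ConvexOn ℝ Set.univ (fun s : ℝ => f (b + s • v)) := by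
    refine ⟨convex_univ, fun s _ r _ α β hα hβ hαβ => ?_⟩
    have := hfc.2 (Set.mem_univ (b + s • v)) (Set.mem_univ (b + r • v)) hα hβ hαβ
    convert this using 2
    have : b = (α + β) • b := by rw [hαβ, one_smul]
    nth_rewrite 1 [this]
    simp only [smul_eq_mul]
    module
  have h := hc.le_slope_of_hasDerivAt (Set.mem_univ 0) (Set.mem_univ 1) one_pos
    (aux_line f hfd b v 0)
  simp [slope, hw, -inner_gradient_left] at h
  linarith

lemma aux_ident {n : ℕ} (b p w : E n) (s : ℝ) :
    ‖((1 - s) • p + s • w) - b‖ ^ 2 =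
      (1 - s) * ‖p - b‖ ^ 2 + s * ‖w - b‖ ^ 2 - s * (1 - s) * ‖w - p‖ ^ 2 := by
  have h1 : ((1 - s) • p + s • w) - b = (p - b) + s • ((w - b) - (p - b)) := by module
  have h2 : w - p = (w - b) - (p - b) := by abel
  rw [h1, h2]
  generalize p - b = u
  generalize w - b = q
  simp only [← real_inner_self_eq_norm_sq, inner_add_left, inner_add_right, inner_sub_left,
    inner_sub_right, inner_smul_left, inner_smul_right, real_inner_comm q u]
  simp
  ring

lemma aux_strong {n : ℕ} (h : E n → ℝ) (hc : ConvexOn ℝ Set.univ h) (ℓ : ℝ)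
    (b p : E n) (hmin : ∀ w, h p + ℓ / 2 * ‖p - b‖ ^ 2 ≤ h w + ℓ / 2 * ‖w - b‖ ^ 2) (w : E n) :
    h p + ℓ / 2 * ‖p - b‖ ^ 2 + ℓ / 2 * ‖w - p‖ ^ 2 ≤ h w + ℓ / 2 * ‖w - b‖ ^ 2 := by
  set A := h w + ℓ / 2 * ‖w - b‖ ^ 2 - (h p + ℓ / 2 * ‖p - b‖ ^ 2) with hA
  have key : ∀ s ∈ Set.Ioo (0:ℝ) 1, (1 - s) * (ℓ / 2 * ‖w - p‖ ^ 2) ≤ A := by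
    intro s hs
    have h1 := hmin ((1 - s) • p + s • w)
    have h2 := hc.2 (Set.mem_univ p) (Set.mem_univ w) (sub_nonneg.2 hs.2.le) hs.1.le
      (by ring : 1 - s + s = 1)
    rw [aux_ident] at h1
    simp only [smul_eq_mul] at h2
    have h3 : s * ((1 - s) * (ℓ / 2 * ‖w - p‖ ^ 2)) ≤ s * A := by
      rw [hA]; linarith
    exact le_of_mul_le_mul_left h3 hs.1
  have ht : Filter.Tendsto (fun s : ℝ => (1 - s) * (ℓ / 2 * ‖w - p‖ ^ 2))
      (nhdsWithin 0 (Set.Ioi 0)) (nhds ((1 - 0) * (ℓ / 2 * ‖w - p‖ ^ 2))) := by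
    apply Filter.Tendsto.mono_left _ nhdsWithin_le_nhds
    exact (Continuous.tendsto (by fun_prop) _)
  have := le_of_tendsto ht (Filter.eventually_of_mem (Ioo_mem_nhdsGT one_pos) key)
  linarith

lemma aux_tele {n : ℕ} (x y p w : E n) (t : ℝ) :
    (t ^ 2 - t) * (‖x - y‖ ^ 2 - ‖x - p‖ ^ 2) + t * (‖w - y‖ ^ 2 - ‖w - p‖ ^ 2) =
      ‖t • y - (t - 1) • x - w‖ ^ 2 - ‖t • p - (t - 1) • x - w‖ ^ 2 := by
  simp only [← real_inner_self_eq_norm_sq, inner_add_left, inner_add_right, inner_sub_left,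
    inner_sub_right, inner_smul_left, inner_smul_right, real_inner_comm y x, real_inner_comm p x,
    real_inner_comm w x, real_inner_comm w y, real_inner_comm w p]
  simp
  ring

theorem stmt_14
    (n m : ℕ) (hn : 1 ≤ n) (hm : 1 ≤ m)
    (f g F : Fin m → E n → ℝ)
    (L : Fin m → ℝ) (hL : ∀ i, 0 < L i)
    (hfc : ∀ i, ConvexOn ℝ Set.univ (f i))
    (hfd : ∀ i, ContDiff ℝ 1 (f i))
    (hflip : ∀ i a b, ‖gradient (f i) a - gradient (f i) b‖ ≤ L i * ‖a - b‖)
    (hgc : ∀ i, ConvexOn ℝ Set.univ (g i))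
    (hF : ∀ i w, F i w = f i w + g i w)
    (ℓ : ℝ) (hℓ : 0 < ℓ) (hℓL : ∀ i, L i ≤ ℓ)
    (d : E n → E n → E n)
    (hd : ∀ a b w,
      (⨆ i, (⟪gradient (f i) b, d a b - b⟫ + g i (d a b) + f i b - F i a)) +
          ℓ / 2 * ‖d a b - b‖ ^ 2 ≤
        (⨆ i, (⟪gradient (f i) b, w - b⟫ + g i w + f i b - F i a)) +
          ℓ / 2 * ‖w - b‖ ^ 2)
    (x y z : ℕ → E n) (t : ℕ → ℝ)
    (hy1 : y 1 = x 0) (ht1 : t 1 = 1)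
    (ht : ∀ k, 1 ≤ k → t (k + 1) = (1 + Real.sqrt (1 + 4 * t k ^ 2)) / 2)
    (hz : ∀ k, 1 ≤ k → z k = d (x (k - 1)) (y k))
    (hxpos : ∀ k, 1 ≤ k → 0 ≤ (⨆ i, (F i (x (k - 1)) - F i (z k))) → x k = z k)
    (hxneg : ∀ k, 1 ≤ k → ¬ 0 ≤ (⨆ i, (F i (x (k - 1)) - F i (z k))) → x k = x (k - 1))
    (hy : ∀ k, 1 ≤ k →
      y (k + 1) = x k + (t k / t (k + 1)) • (z k - x k) +
        ((t k - 1) / t (k + 1)) • (x k - x (k - 1))) :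
    ∀ (w : E n) (k : ℕ), 1 ≤ k →
      t k ^ 2 * (⨅ i, (F i (x k) - F i w)) ≤ ℓ / 2 * ‖x 0 - w‖ ^ 2 := by
  intro w
  haveI : Nonempty (Fin m) := ⟨⟨0, hm⟩⟩
  have bdA : ∀ u : Fin m → ℝ, BddAbove (Set.range u) := fun u => (Set.finite_range u).bddAbove
  have bdB : ∀ u : Fin m → ℝ, BddBelow (Set.range u) := fun u => (Set.finite_range u).bddBelow
  -- basic inequality
  have base : ∀ a b v : E n, (⨆ i, (F i (d a b) - F i a)) + ℓ / 2 * ‖v - d a b‖ ^ 2 ≤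
      (⨆ i, (F i v - F i a)) + ℓ / 2 * ‖v - b‖ ^ 2 := by
    intro a b v
    have hc : ConvexOn ℝ Set.univ
        (fun v => ⨆ i, (⟪gradient (f i) b, v - b⟫ + g i v + f i b - F i a)) := by
      refine ⟨convex_univ, fun p _ q _ α β hα hβ hαβ => ?_⟩
      refine ciSup_le fun i => ?_
      have h1 := (hgc i).2 (Set.mem_univ p) (Set.mem_univ q) hα hβ hαβ
      have h2 := mul_le_mul_of_nonneg_left (le_ciSup (bdA fun i =>
        (⟪gradient (f i) b, p - b⟫ + g i p + f i b - F i a)) i) hα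
      have h3 := mul_le_mul_of_nonneg_left (le_ciSup (bdA fun i =>
        (⟪gradient (f i) b, q - b⟫ + g i q + f i b - F i a)) i) hβ
      have h4 : ⟪gradient (f i) b, α • p + β • q - b⟫ =
          α * ⟪gradient (f i) b, p - b⟫ + β * ⟪gradient (f i) b, q - b⟫ := by
        have : α • p + β • q - b = α • (p - b) + β • (q - b) := by
          have hb : b = (α + β) • b := by rw [hαβ, one_smul]
          nth_rewrite 1 [hb]
          module
        rw [this, inner_add_right, inner_smul_right, inner_smul_right]
      have h5 : f i b - F i a = α * (f i b - F i a) + β * (f i b - F i a) := by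
        rw [← add_mul, hαβ, one_mul]
      simp only [smul_eq_mul] at *
      rw [h4]
      linarith
    have hs := aux_strong _ hc ℓ b (d a b) (hd a b) v
    have h1 : (⨆ i, (⟪gradient (f i) b, v - b⟫ + g i v + f i b - F i a)) ≤
        ⨆ i, (F i v - F i a) := by
      refine ciSup_mono (bdA _) fun i => ?_
      have := aux_grad (f i) (hfd i) (hfc i) b v
      have := hF i v
      linarith
    have h2 : (⨆ i, (F i (d a b) - F i a)) ≤
        (⨆ i, (⟪gradient (f i) b, d a b - b⟫ + g i (d a b) + f i b - F i a)) +
          ℓ / 2 * ‖d a b - b‖ ^ 2 := by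
      refine ciSup_le fun i => ?_
      have e1 := aux_descent (f i) (hfd i) (L i) (hflip i) b (d a b)
      have e2 := le_ciSup (bdA fun i =>
        (⟪gradient (f i) b, d a b - b⟫ + g i (d a b) + f i b - F i a)) i
      have e3 := hF i (d a b)
      have e4 := mul_le_mul_of_nonneg_right (hℓL i) (sq_nonneg ‖d a b - b‖)
      linarith
    linarith
  have hneg : ∀ a v : E n, (⨆ i, (F i v - F i a)) ≤ - ⨅ i, (F i a - F i v) := by
    intro a v
    refine ciSup_le fun i => ?_
    have := ciInf_le (bdB fun i => F i a - F i v) i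
    linarith
  have hstep : ∀ k, (⨅ i, (F i (x (k+1)) - F i w)) ≤
      (⨅ i, (F i (x k) - F i w)) + ⨆ i, (F i (z (k+1)) - F i (x k)) := by
    intro k
    rw [← sub_le_iff_le_add]
    refine le_ciInf fun i => ?_
    have e1 := ciInf_le (bdB fun i => F i (x (k+1)) - F i w) i
    have e2 := le_ciSup (bdA fun i => F i (z (k+1)) - F i (x k)) i
    by_cases h : 0 ≤ (⨆ i, (F i (x (k + 1 - 1)) - F i (z (k+1))))
    · rw [hxpos (k+1) (by omega) h] at e1 ⊢
      linarith
    · have hx := hxneg (k+1) (by omega) h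
      simp only [Nat.add_sub_cancel] at h hx
      have e3 := le_ciSup (bdA fun i => F i (x k) - F i (z (k+1))) i
      rw [hx] at e1 ⊢
      linarith
  have hA : ∀ k, (⨅ i, (F i (x (k+1)) - F i w)) ≤
      ℓ / 2 * (‖w - y (k+1)‖ ^ 2 - ‖w - z (k+1)‖ ^ 2) := by
    intro k
    have h1 := base (x k) (y (k+1)) w
    have h2 := hz (k+1) (by omega)
    rw [Nat.add_sub_cancel] at h2
    rw [← h2] at h1
    have := hneg (x k) w
    have := hstep k
    linarith
  have hB : ∀ k, (⨅ i, (F i (x (k+1)) - F i w)) - (⨅ i, (F i (x k) - F i w)) ≤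
      ℓ / 2 * (‖x k - y (k+1)‖ ^ 2 - ‖x k - z (k+1)‖ ^ 2) := by
    intro k
    have h1 := base (x k) (y (k+1)) (x k)
    have h2 := hz (k+1) (by omega)
    rw [Nat.add_sub_cancel] at h2
    rw [← h2] at h1
    simp only [sub_self, ciSup_const] at h1
    have := hstep k
    linarith
  have ht1' : ∀ k, 1 ≤ t (k+1) := by
    intro k
    rcases Nat.eq_zero_or_pos k with rfl | hk
    · simp [ht1]
    · rw [ht k hk]
      have : 1 ≤ Real.sqrt (1 + 4 * t k ^ 2) := Real.one_le_sqrt.2 (by nlinarith [sq_nonneg (t k)])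
      linarith
  have main : ∀ k, t (k+1) ^ 2 * (⨅ i, (F i (x (k+1)) - F i w)) +
      ℓ / 2 * ‖t (k+1) • z (k+1) - (t (k+1) - 1) • x k - w‖ ^ 2 ≤ ℓ / 2 * ‖x 0 - w‖ ^ 2 := by
    intro k
    induction k with
    | zero =>
      have := hA 0
      simp only [zero_add, hy1, ht1] at this ⊢
      rw [norm_sub_rev w, norm_sub_rev w] at this
      simp
      linarith
    | succ k ih =>
      have htt : t (k+1) ^ 2 = t (k+1+1) ^ 2 - t (k+1+1) := by
        rw [ht (k+1) (by omega)]
        have := Real.sq_sqrt (by positivity : 0 ≤ 1 + 4 * t (k+1) ^ 2)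
        linarith
      have h1 := ht1' (k+1)
      have hyy : t (k+1+1) • y (k+1+1) - (t (k+1+1) - 1) • x (k+1) =
          t (k+1) • z (k+1) - (t (k+1) - 1) • x k := by
        rw [hy (k+1) (by omega), Nat.add_sub_cancel]
        have hne : t (k+1+1) ≠ 0 := by linarith
        rw [smul_add, smul_add, smul_smul, smul_smul, mul_div_cancel₀ _ hne,
          mul_div_cancel₀ _ hne]
        module
      have tele := aux_tele (x (k+1)) (y (k+1+1)) (z (k+1+1)) w (t (k+1+1))
      rw [hyy] at tele
      have a := mul_le_mul_of_nonneg_left (hA (k+1)) (by linarith : 0 ≤ t (k+1+1))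
      have b := mul_le_mul_of_nonneg_left (hB (k+1))
        (by nlinarith : 0 ≤ t (k+1+1) ^ 2 - t (k+1+1))
      have tele' := congrArg (fun r => ℓ / 2 * r) tele
      rw [htt] at ih
      linarith
  intro k hk
  obtain ⟨k, rfl⟩ : ∃ j, k = j + 1 := ⟨k - 1, by omega⟩
  have := main k
  have : 0 ≤ ℓ / 2 * ‖t (k+1) • z (k+1) - (t (k+1) - 1) • x k - w‖ ^ 2 := by positivity
  linarith
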